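/- Every orthonormalizable A-module is flat over A. That is, if A is a commutative Noetherian complete local ring with maximal ideal m, and V is an A-module which is m-adically complete and separated and such that V/m^iV is a free A/m^i-module for every i ≥ 1, then V is a flat A-module. -/

import Mathlib

section Aux

variable {A : Type*} [CommRing A]

/-- Coordinatewise criterion for membership in `I • ⊤` in a finite free module. -/
lemma aux_mem_smul_top_pi {l : ℕ} (I : Ideal A) (c : Fin l → A) :
    c ∈ I • (⊤ : Submodule A (Fin l → A)) ↔ ∀ i, c i ∈ I := by
  constructor
  · intro h
    refine Submodule.smul_induction_on h ?_ ?_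
    · intro r hr n _ i
      exact I.mul_mem_right _ hr
    · intro x y hx hy i
      exact I.add_mem (hx i) (hy i)
  · intro h
    rw [pi_eq_sum_univ' c]
    exact Submodule.sum_mem _ fun i _ => Submodule.smul_mem_smul (h i) trivial

/-- Artin-Rees, in the form of an inclusion valid for all `n`. -/
lemma aux_artin_rees [IsNoetherianRing A] (I : Ideal A) {M : Type*} [AddCommGroup M] [Module A M]
    [Module.Finite A M] (N : Submodule A M) :
    ∃ k : ℕ, ∀ n, ∀ x ∈ N, x ∈ I ^ n • (⊤ : Submodule A M) → x ∈ I ^ (n - k) • N := by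
  obtain ⟨k, hk⟩ := I.exists_pow_inf_eq_pow_smul N
  refine ⟨k, fun n x hx hx' => ?_⟩
  rcases le_total k n with h | h
  · have : x ∈ I ^ n • (⊤ : Submodule A M) ⊓ N := ⟨hx', hx⟩
    rw [hk n h] at this
    exact Submodule.smul_mono le_rfl inf_le_right this
  · rw [Nat.sub_eq_zero_of_le h]
    simpa using hx

/-- The ring-level approximation step. -/
lemma aux_ring_step [IsNoetherianRing A] (m : Ideal A) {l : ℕ} (f : Fin l → A) :
    ∃ (r k k' : ℕ) (a : Fin l → Fin r → A), (∀ j, ∑ i, f i * a i j = 0) ∧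
      ∀ (p : ℕ) (c : Fin l → A), (∀ i, c i ∈ m ^ p) → ∑ i, f i * c i ∈ m ^ (p + 1 + k) →
        ∃ t : Fin r → A, (∀ j, t j ∈ m ^ (p - k')) ∧
          ∀ i, c i - ∑ j, a i j * t j ∈ m ^ (p + 1) := by
  let F : (Fin l → A) →ₗ[A] A := Fintype.linearCombination A f
  have hF : ∀ c, F c = ∑ i, f i * c i := fun c => by
    simp [F, Fintype.linearCombination_apply, mul_comm]
  obtain ⟨r, s, hs⟩ := Submodule.fg_iff_exists_fin_generating_family.mp
    (IsNoetherian.noetherian (LinearMap.ker F))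
  obtain ⟨k, hk⟩ := aux_artin_rees m (LinearMap.range F)
  obtain ⟨k', hk'⟩ := aux_artin_rees m (LinearMap.ker F)
  refine ⟨r, k, k', fun i j => s j i, fun j => ?_, fun p c hc hfc => ?_⟩
  · rw [← hF, ← LinearMap.mem_ker, ← hs]
    exact Submodule.subset_span ⟨j, rfl⟩
  · rw [← hF] at hfc
    have h1 := hk (p + 1 + k) (F c) ⟨c, rfl⟩ (by simpa using hfc)
    rw [Nat.add_sub_cancel, LinearMap.range_eq_map, ← Submodule.map_smul''] at h1
    obtain ⟨d, hd, hdc⟩ := h1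
    have hd' := (aux_mem_smul_top_pi _ _).1 hd
    have h2 : c - d ∈ LinearMap.ker F := by simp [hdc]
    have h3 := hk' p (c - d) h2 ((aux_mem_smul_top_pi _ _).2 fun i =>
      Ideal.sub_mem _ (hc i) (Ideal.pow_le_pow_right (Nat.le_succ p) (hd' i)))
    rw [← hs, Submodule.mem_ideal_smul_span_iff_exists_sum] at h3
    obtain ⟨t, ht, hts⟩ := h3
    refine ⟨t, ht, fun i => ?_⟩
    have h4 : ∑ j, s j i * t j = c i - d i := by
      have := congrFun hts i
      rw [Finsupp.sum_fintype _ _ (by simp)] at this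
      simpa [mul_comm] using this
    rw [h4]
    simpa using hd' i

universe w

variable {V : Type w} [AddCommGroup V] [Module A V]

/-- Lifting a basis of the quotient. -/
lemma aux_lift_basis (I : Ideal A)
    (h : Module.Free (A ⧸ I) (V ⧸ (I • (⊤ : Submodule A V)))) :
    ∃ (B : Type w) (e : B → V),
      (∀ v, ∃ c : B →₀ A, v - Finsupp.linearCombination A e c ∈ I • (⊤ : Submodule A V)) ∧
      (∀ c : B →₀ A, Finsupp.linearCombination A e c ∈ I • (⊤ : Submodule A V) →
        ∀ b, c b ∈ I) := by
  let b := Module.Free.chooseBasis (A ⧸ I) (V ⧸ (I • (⊤ : Submodule A V)))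
  choose e he using fun i => Submodule.mkQ_surjective _ (b i)
  have mem_iff : ∀ v, (I • (⊤ : Submodule A V)).mkQ v = 0 ↔ v ∈ I • (⊤ : Submodule A V) :=
    fun v => Submodule.Quotient.mk_eq_zero _
  have key : ∀ c : _ →₀ A, (I • (⊤ : Submodule A V)).mkQ (Finsupp.linearCombination A e c) =
      Finsupp.linearCombination (A ⧸ I) b (c.mapRange (Ideal.Quotient.mk I) (map_zero _)) := by
    intro c
    rw [Finsupp.linearCombination_apply, Finsupp.linearCombination_apply, Finsupp.sum_mapRange_index
      (by simp), Finsupp.sum, Finsupp.sum, map_sum]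
    refine Finset.sum_congr rfl fun i _ => ?_
    rw [map_smul, he]
    rfl
  refine ⟨_, e, fun v => ?_, fun c hc i => ?_⟩
  · obtain ⟨c, hc⟩ := Finsupp.mapRange_surjective (Ideal.Quotient.mk I) (map_zero _)
      Ideal.Quotient.mk_surjective (b.repr ((I • (⊤ : Submodule A V)).mkQ v))
    refine ⟨c, ?_⟩
    rw [← mem_iff, map_sub, key, hc,
      b.linearCombination_repr, sub_self]
  · rw [← mem_iff, key] at hc
    have := linearIndependent_iff.1 b.linearIndependent _ hc
    have := DFunLike.congr_fun this i
    rw [Finsupp.mapRange_apply] at this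
    exact Ideal.Quotient.eq_zero_iff_mem.1 this

/-- The module-level approximation step. -/
lemma aux_module_step [IsNoetherianRing A] (m : Ideal A)
    (hVfree : ∀ i : ℕ, 1 ≤ i →
      Module.Free (A ⧸ (m ^ i)) (V ⧸ ((m ^ i) • (⊤ : Submodule A V))))
    {l : ℕ} (f : Fin l → A) :
    ∃ (r k' : ℕ) (a : Fin l → Fin r → A), (∀ j, ∑ i, f i * a i j = 0) ∧
      ∀ (p : ℕ) (x : Fin l → V), (∀ i, x i ∈ m ^ p • (⊤ : Submodule A V)) →
        ∑ i, f i • x i = 0 →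
        ∃ y : Fin r → V, (∀ j, y j ∈ m ^ (p - k') • (⊤ : Submodule A V)) ∧
          ∀ i, x i - ∑ j, a i j • y j ∈ m ^ (p + 1) • (⊤ : Submodule A V) := by
  classical
  obtain ⟨r, k, k', a, ha, H⟩ := aux_ring_step m f
  refine ⟨r, k', a, ha, fun p x hx hfx => ?_⟩
  obtain ⟨B, e, he1, he2⟩ := aux_lift_basis _ (hVfree (p + 1 + k) (by omega))
  have he3 : ∀ v ∈ m ^ p • (⊤ : Submodule A V), ∃ c : B →₀ A, (∀ b, c b ∈ m ^ p) ∧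
      v - Finsupp.linearCombination A e c ∈ m ^ (p + 1 + k) • (⊤ : Submodule A V) := by
    intro v hv
    refine Submodule.smul_induction_on hv ?_ ?_
    · intro s hs w _
      obtain ⟨c, hc⟩ := he1 w
      refine ⟨s • c, fun b => Ideal.mul_mem_right _ _ hs, ?_⟩
      rw [map_smul, ← smul_sub]
      exact Submodule.smul_mem _ _ hc
    · rintro v w ⟨c, hc, hc'⟩ ⟨d, hd, hd'⟩
      refine ⟨c + d, fun b => Ideal.add_mem _ (hc b) (hd b), ?_⟩
      rw [map_add, add_sub_add_comm]
      exact Submodule.add_mem _ hc' hd'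
  choose c hc1 hc2 using fun i => he3 (x i) (hx i)
  have h1 : Finsupp.linearCombination A e (∑ i, f i • c i) ∈
      m ^ (p + 1 + k) • (⊤ : Submodule A V) := by
    have : Finsupp.linearCombination A e (∑ i, f i • c i) =
        - ∑ i, f i • (x i - Finsupp.linearCombination A e (c i)) := by
      simp [smul_sub, hfx, map_sum]
    rw [this]
    exact Submodule.neg_mem _ (Submodule.sum_mem _ fun i _ => Submodule.smul_mem _ _ (hc2 i))
  have h2 := he2 _ h1
  choose t ht1 ht2 using fun b => H p (fun i => c i b) (fun i => hc1 i b)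
    (by simpa [Finsupp.finsetSum_apply] using h2 b)
  let s : Finset B := Finset.univ.biUnion fun i => (c i).support
  refine ⟨fun j => ∑ b ∈ s, t b j • e b, fun j => Submodule.sum_mem _ fun b _ =>
    Submodule.smul_mem_smul (ht1 b j) trivial, fun i => ?_⟩
  have h3 : Finsupp.linearCombination A e (c i) = ∑ b ∈ s, c i b • e b := by
    rw [Finsupp.linearCombination_apply]
    refine Finsupp.sum_of_support_subset _ ?_ _ (by simp)
    exact Finset.subset_biUnion_of_mem (fun i => (c i).support) (Finset.mem_univ i)
  have h4 : x i - ∑ j, a i j • ∑ b ∈ s, t b j • e b =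
      (x i - Finsupp.linearCombination A e (c i)) +
        ∑ b ∈ s, (c i b - ∑ j, a i j * t b j) • e b := by
    rw [h3]
    simp only [sub_smul, Finset.sum_sub_distrib, Finset.smul_sum, Finset.sum_smul, mul_smul]
    rw [Finset.sum_comm]
    abel
  rw [h4]
  refine Submodule.add_mem _ ?_ (Submodule.sum_mem _ fun b _ =>
    Submodule.smul_mem_smul (ht2 b i) trivial)
  exact Submodule.smul_mono_left (Ideal.pow_le_pow_right (by omega)) (hc2 i)

lemma aux_flat [IsNoetherianRing A] (m : Ideal A) (hV : IsAdicComplete m V)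
    (hVfree : ∀ i : ℕ, 1 ≤ i →
      Module.Free (A ⧸ (m ^ i)) (V ⧸ ((m ^ i) • (⊤ : Submodule A V)))) :
    Module.Flat A V := by
  refine Module.Flat.of_forall_isTrivialRelation fun {l f x} hfx => ?_
  obtain ⟨r, k, a, ha, H⟩ := aux_module_step (V := V) m hVfree f
  choose! Y hY1 hY2 using H
  have mono : ∀ {p q : ℕ}, p ≤ q →
      m ^ q • (⊤ : Submodule A V) ≤ m ^ p • (⊤ : Submodule A V) := fun h =>
    Submodule.smul_mono_left (Ideal.pow_le_pow_right h)
  -- the partial sums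
  let S : ℕ → Fin r → V := fun p => Nat.rec 0
    (fun p s => s + Y p (fun i => x i - ∑ j, a i j • s j)) p
  let X : ℕ → Fin l → V := fun p i => x i - ∑ j, a i j • S p j
  have hS : ∀ p, S (p + 1) = S p + Y p (X p) := fun p => rfl
  have hXf : ∀ p, ∑ i, f i • X p i = 0 := by
    intro p
    simp only [X, smul_sub, Finset.sum_sub_distrib, hfx, Finset.smul_sum, smul_smul]
    rw [Finset.sum_comm]
    simp [← Finset.sum_smul, ha]
  have hX : ∀ p i, X p i ∈ m ^ p • (⊤ : Submodule A V) := by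
    intro p
    induction p with
    | zero => intro i; simp
    | succ p ih =>
      intro i
      have h := hY2 p (X p) ih (hXf p) i
      have : X (p + 1) i = X p i - ∑ j, a i j • Y p (X p) j := by
        simp only [X, hS, Pi.add_apply, smul_add, Finset.sum_add_distrib]
        abel
      rwa [this]
  have hcauchy : ∀ j p d, S (p + k + d) j - S (p + k) j ∈ m ^ p • (⊤ : Submodule A V) := by
    intro j p d
    induction d with
    | zero => simp
    | succ d ih =>
      rw [← add_assoc, hS, Pi.add_apply, add_sub_right_comm]
      exact Submodule.add_mem _ ih (mono (by omega) (hY1 _ _ (hX (p + k + d)) (hXf _) j))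
  have hlim : ∀ j, ∃ L : V, ∀ n, S (n + k) j ≡ L [SMOD (m ^ n • ⊤ : Submodule A V)] := by
    intro j
    refine hV.toIsPrecomplete.prec (f := fun n => S (n + k) j) ?_
    intro p q hpq
    obtain ⟨d, rfl⟩ := Nat.exists_eq_add_of_le hpq
    refine SModEq.symm (SModEq.sub_mem.2 ?_)
    have := hcauchy j p d
    rwa [add_right_comm] at this
  choose L hL using hlim
  refine ⟨r, a, L, fun i => ?_, ha⟩
  rw [← sub_eq_zero]
  refine hV.toIsHausdorff.haus _ fun n => SModEq.zero.2 ?_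
  have h5 : x i - ∑ j, a i j • L j = X (n + k) i + ∑ j, a i j • (S (n + k) j - L j) := by
    simp only [X, smul_sub, Finset.sum_sub_distrib]
    abel
  rw [h5]
  exact Submodule.add_mem _ (mono (by omega) (hX (n + k) i)) (Submodule.sum_mem _ fun j _ =>
    Submodule.smul_mem _ _ (SModEq.sub_mem.1 (hL j n)))

end Aux


/-- **Every orthonormalizable module over a complete Noetherian local ring is flat.**

Let `A` be a commutative Noetherian complete local ring with maximal ideal `m` (completeness
and separatedness being expressed by `IsAdicComplete m A`).  An `A`-module `V` is called
*orthonormalizable* if `V` is `m`-adically complete and separated (`IsAdicComplete m V`) and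
the quotient `V / m^i V` is a free `A / m^i`-module for every `i ≥ 1`.  The statement: every
orthonormalizable `A`-module is flat over `A`. -/
theorem flat_of_orthonormalizable
    (A : Type*) [CommRing A] [IsNoetherianRing A] [IsLocalRing A]
    [IsAdicComplete (IsLocalRing.maximalIdeal A) A]
    (V : Type*) [AddCommGroup V] [Module A V]
    (hVcomplete : IsAdicComplete (IsLocalRing.maximalIdeal A) V)
    (hVfree : ∀ i : ℕ, 1 ≤ i →
      Module.Free (A ⧸ (IsLocalRing.maximalIdeal A ^ i))
        (V ⧸ ((IsLocalRing.maximalIdeal A ^ i) • (⊤ : Submodule A V)))) :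
    Module.Flat A V := by
  exact aux_flat _ hVcomplete hVfree
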